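/- arXiv:2009.08676 — 3 statements merged into one kernel-verified Lean document; each statement's English description precedes it below -/
import Mathlib

section
/- Let n ≥ 1 be an integer. Set n̄ := n if n is odd and n̄ := n/2 if n is even, and u := 1 if n is odd and u := 2 if n is even. Let h ≥ 1 and l be integers with gcd(h, u·l) = 1, (n̄+1)·h + 2·n̄·l > 0 and h + 2·l ≤ 0. Let M ⊆ ℤ⁴ be the subgroup generated by the three vectors v₁ = (−1, n̄, h, 0), v₂ = (−1, 0, 0, n̄) and v₃ = (u, −u·(n̄−1)/2, u·l, −u·(n̄−1)/2) (note that u·(n̄−1)/2 is an integer in both parity cases). Define d := gcd(n, h) if n is odd or h + 2·l is even, and d := gcd(n̄ + h, n̄ − h) otherwise. Then the quotient abelian group ℤ⁴/M is isomorphic to ℤ × ℤ/dℤ. -/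
/-!
The entry `-1` of `v₂` eliminates the first coordinate of `ℤ⁴`, and the coprime entries `h`, `u * l`
of `v₁`, `v₃` eliminate the third, leaving `ℤ²` modulo the single relation
`(u * l * n̄ + h * w, -h * u)`. In a suitable basis of `ℤ²` this relation is `(0, g)`, with `g` the
gcd of its entries, so the cokernel is `ℤ × ℤ/gℤ`. It remains to see that `g = d`. For `n` odd,
`h ∣ h * w` and `l` is coprime to `h`. For `n` even, the first entry is congruent to
`(2 * l + h) * (n̄ - h)` modulo `2 * h`, to which `2 * l + h` is coprime.
-/

open AddSubgroup hiding closure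
open QuotientAddGroup

section Quotient

variable {G H : Type*} [AddCommGroup G] [AddCommGroup H]

theorem nonempty_quotient_addEquiv_quotient_map {f : G →+ H} (hf : Function.Surjective f)
    {M : AddSubgroup G} (hM : f.ker ≤ M) : Nonempty (G ⧸ M ≃+ H ⧸ M.map f) := by
  have hker : M = ((mk' (M.map f)).comp f).ker := by
    rw [← AddMonoidHom.comap_ker, ker_mk', comap_map_eq_self hM]
  exact ⟨(quotientAddEquivOfEq hker).trans
    (quotientKerEquivOfSurjective _ ((mk'_surjective _).comp hf))⟩

theorem closure_pair_zsmul_of_isCoprime {p q : ℤ} (hpq : IsCoprime p q) (x : G) :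
    AddSubgroup.closure {p • x, q • x} = zmultiples x := by
  obtain ⟨r, s, hrs⟩ := hpq
  apply le_antisymm
  · rw [closure_le, Set.pair_subset_iff]
    exact ⟨zsmul_mem_zmultiples x p, zsmul_mem_zmultiples x q⟩
  · rw [zmultiples_le, mem_closure_pair]
    exact ⟨r, s, by linear_combination (norm := module) hrs • x⟩

theorem nonempty_quotient_closure_pair_addEquiv {h k : ℤ} (hhk : IsCoprime h k) (x y : G) :
    Nonempty ((ℤ × G) ⧸ AddSubgroup.closure {(h, x), (k, y)} ≃+
      G ⧸ zmultiples (k • x - h • y)) := by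
  obtain ⟨p, q, hpq⟩ := hhk
  let f : ℤ × G →+ G :=
    AddMonoidHom.snd ℤ G - (zmultiplesHom G (p • x + q • y)).comp (AddMonoidHom.fst ℤ G)
  have f_apply (t : ℤ) (g : G) : f (t, g) = g - t • (p • x + q • y) := rfl
  have hf : Function.Surjective f := fun g ↦ ⟨(0, g), by rw [f_apply, zero_smul, sub_zero]⟩
  have hker : f.ker ≤ AddSubgroup.closure {(h, x), (k, y)} := by
    rintro ⟨t, g⟩ hg
    rw [AddMonoidHom.mem_ker, f_apply, sub_eq_zero] at hg
    refine mem_closure_pair.2 ⟨t * p, t * q, Prod.ext ?_ ?_⟩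
    · change t * p * h + t * q * k = t
      linear_combination t * hpq
    · change (t * p) • x + (t * q) • y = g
      rw [hg]
      module
  have hmap : (AddSubgroup.closure {(h, x), (k, y)}).map f = zmultiples (k • x - h • y) := by
    have hx : f (h, x) = q • (k • x - h • y) := by
      rw [f_apply]
      linear_combination (norm := module) -hpq • x
    have hy : f (k, y) = (-p) • (k • x - h • y) := by
      rw [f_apply]
      linear_combination (norm := module) -hpq • y
    rw [AddMonoidHom.map_closure, Set.image_pair, hx, hy]
    exact closure_pair_zsmul_of_isCoprime ⟨k, -h, by linear_combination hpq⟩ _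
  rw [← hmap]
  exact nonempty_quotient_addEquiv_quotient_map hf hker

end Quotient

theorem exists_isCoprime_and_eq_gcd_mul (a b : ℤ) :
    ∃ a' b' : ℤ, IsCoprime a' b' ∧ a = Int.gcd a b * a' ∧ b = Int.gcd a b * b' := by
  obtain ⟨a', b', ha, hb, hunit⟩ := extract_gcd a b
  exact ⟨a', b', (gcd_isUnit_iff a' b').1 hunit, ha, hb⟩

theorem nonempty_quotient_zmultiples_mul_addEquiv {a b : ℤ} (hab : IsCoprime a b) (g : ℕ) :
    Nonempty ((ℤ × ℤ) ⧸ zmultiples ((g * a, g * b) : ℤ × ℤ) ≃+ ℤ × ZMod g) := by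
  obtain ⟨s, t, hst⟩ := hab
  let f : ℤ × ℤ →+ ℤ × ZMod g := AddMonoidHom.mk'
    (fun x ↦ (b * x.1 - a * x.2, ((s * x.1 + t * x.2 : ℤ) : ZMod g)))
    (fun x y ↦ by
      ext
      · simp only [Prod.fst_add, Prod.snd_add]
        ring
      · simp only [Prod.fst_add, Prod.snd_add]
        push_cast
        ring)
  have f_apply (x y : ℤ) : f (x, y) = (b * x - a * y, ((s * x + t * y : ℤ) : ZMod g)) := rfl
  have hf : Function.Surjective f := by
    rintro ⟨i, j⟩
    obtain ⟨j, rfl⟩ := ZMod.intCast_surjective j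
    refine ⟨(t * i + a * j, b * j - s * i), ?_⟩
    rw [f_apply]
    congr 2
    · linear_combination i * hst
    · linear_combination j * hst
  have hker : zmultiples ((g * a, g * b) : ℤ × ℤ) = f.ker := by
    ext ⟨x, y⟩
    simp only [mem_zmultiples_iff, AddMonoidHom.mem_ker, f_apply, Prod.mk_eq_zero,
      ZMod.intCast_zmod_eq_zero_iff_dvd, Prod.smul_mk, Prod.mk.injEq, smul_eq_mul]
    constructor
    · rintro ⟨c, rfl, rfl⟩
      exact ⟨by ring, c, by linear_combination c * g * hst⟩
    · rintro ⟨hxy, c, hc⟩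
      exact ⟨c, by linear_combination x * hst - t * hxy - a * hc,
        by linear_combination y * hst + s * hxy - b * hc⟩
  exact ⟨(quotientAddEquivOfEq hker).trans (quotientKerEquivOfSurjective f hf)⟩

theorem nonempty_quotient_zmultiples_addEquiv (a b : ℤ) :
    Nonempty ((ℤ × ℤ) ⧸ zmultiples (a, b) ≃+ ℤ × ZMod (Int.gcd a b)) := by
  obtain ⟨a', b', hcop, ha, hb⟩ := exists_isCoprime_and_eq_gcd_mul a b
  have hab : (a, b) = (Int.gcd a b * a', Int.gcd a b * b') := Prod.ext ha hb
  rw [hab]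
  exact nonempty_quotient_zmultiples_mul_addEquiv hcop _

/-- The quotient map of `ℤ⁴` by the row `![-1, 0, 0, m]`, used to eliminate the first coordinate.
Its components form a basis of the linear forms vanishing on that row; the last one is chosen to
vanish on every `![-1, m, h, 0]` too. -/
def pivotProjection (m : ℤ) : (Fin 4 → ℤ) →+ ℤ × ℤ × ℤ :=
  AddMonoidHom.mk' (fun x ↦ (x 2, x 1, m * x 0 + x 1 + x 3)) fun x y ↦ by
    simp only [Pi.add_apply, Prod.mk_add_mk, Prod.mk.injEq, true_and]
    ring

theorem pivotProjection_apply (m : ℤ) (x : Fin 4 → ℤ) :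
    pivotProjection m x = (x 2, x 1, m * x 0 + x 1 + x 3) := rfl

theorem pivotProjection_surjective (m : ℤ) : Function.Surjective (pivotProjection m) :=
  fun ⟨a, b, c⟩ ↦ ⟨![0, b, a, c - b], by simp [pivotProjection_apply]⟩

theorem ker_pivotProjection (m : ℤ) : (pivotProjection m).ker = zmultiples ![-1, 0, 0, m] := by
  apply le_antisymm
  · intro x hx
    simp only [AddMonoidHom.mem_ker, pivotProjection_apply, Prod.mk_eq_zero] at hx
    obtain ⟨hx₂, hx₁, hx₃⟩ := hx
    refine mem_zmultiples_iff.2 ⟨-x 0, ?_⟩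
    ext i
    fin_cases i
    · simp
    · simpa using hx₁.symm
    · simpa using hx₂.symm
    · change -x 0 * m = x 3
      linear_combination hx₁ - hx₃
  · rw [zmultiples_le, AddMonoidHom.mem_ker]
    simp [pivotProjection_apply]

theorem nonempty_quotient_closure_rows_addEquiv_quotient_closure_pair (m u w h k : ℤ) :
    Nonempty ((Fin 4 → ℤ) ⧸
        AddSubgroup.closure {![-1, m, h, 0], ![-1, 0, 0, m], ![u, -w, k, -w]} ≃+
      (ℤ × ℤ × ℤ) ⧸ AddSubgroup.closure {(h, m, (0 : ℤ)), (k, -w, u * m - 2 * w)}) := by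
  have hker : (pivotProjection m).ker ≤
      AddSubgroup.closure {![-1, m, h, 0], ![-1, 0, 0, m], ![u, -w, k, -w]} := by
    rw [ker_pivotProjection, zmultiples_le]
    exact subset_closure (by simp)
  have hmap : (AddSubgroup.closure {![-1, m, h, 0], ![-1, 0, 0, m], ![u, -w, k, -w]}).map
      (pivotProjection m) = AddSubgroup.closure {(h, m, 0), (k, -w, u * m - 2 * w)} := by
    have hv₁ : pivotProjection m ![-1, m, h, 0] = (h, m, 0) := by simp [pivotProjection_apply]
    have hv₂ : pivotProjection m ![-1, 0, 0, m] = 0 := by simp [pivotProjection_apply]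
    have hv₃ : pivotProjection m ![u, -w, k, -w] = (k, -w, u * m - 2 * w) := by
      refine Prod.ext rfl (Prod.ext rfl ?_)
      change m * u + -w + -w = u * m - 2 * w
      ring
    rw [AddMonoidHom.map_closure, Set.image_insert_eq, Set.image_pair, hv₁, hv₂, hv₃,
      Set.insert_comm, closure_insert_zero]
  rw [← hmap]
  exact nonempty_quotient_addEquiv_quotient_map (pivotProjection_surjective m) hker

theorem nonempty_quotient_closure_rows_addEquiv {h k : ℤ} (hhk : IsCoprime h k) (m u w : ℤ) :
    Nonempty ((Fin 4 → ℤ) ⧸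
        AddSubgroup.closure {![-1, m, h, 0], ![-1, 0, 0, m], ![u, -w, k, -w]} ≃+
      ℤ × ZMod (Int.gcd (k * m + h * w) (h * (2 * w - u * m)))) := by
  obtain ⟨e₁⟩ := nonempty_quotient_closure_rows_addEquiv_quotient_closure_pair m u w h k
  obtain ⟨e₂⟩ := nonempty_quotient_closure_pair_addEquiv hhk (m, (0 : ℤ)) (-w, u * m - 2 * w)
  obtain ⟨e₃⟩ := nonempty_quotient_zmultiples_addEquiv (k * m + h * w) (h * (2 * w - u * m))
  have hrel : k • (m, (0 : ℤ)) - h • (-w, u * m - 2 * w) =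
      (k * m + h * w, h * (2 * w - u * m)) := by
    simp only [Prod.smul_mk, smul_eq_mul, Prod.mk_sub_mk, Prod.mk.injEq]
    exact ⟨by ring, by ring⟩
  rw [hrel] at e₂
  exact ⟨e₁.trans (e₂.trans e₃)⟩

theorem gcd_mul_add_mul_left_eq_gcd {h l : ℤ} (hhl : IsCoprime h l) (m w : ℤ) :
    Int.gcd (l * m + h * w) h = Int.gcd m h := by
  rw [Int.gcd_add_mul_left_left,
    Int.gcd_mul_right_left_of_gcd_eq_one (Int.isCoprime_iff_gcd_eq_one.1 hhl.symm)]

theorem gcd_two_mul_mul_add_mul_sub_one_eq_gcd {h l : ℤ} (hhl : IsCoprime h (2 * l)) (m : ℤ) :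
    Int.gcd (2 * l * m + h * (m - 1)) (h * 2) = Int.gcd (m + h) (m - h) := by
  have hh2 : IsCoprime h 2 := hhl.of_mul_right_left
  have hcop : IsCoprime (2 * l + h) (h * 2) := by
    refine IsCoprime.mul_right ?_ ?_
    · simpa using hhl.symm.add_mul_left_left 1
    · simpa [add_comm] using hh2.add_mul_left_left l
  obtain ⟨c, hc⟩ : Odd h := Int.isCoprime_two_right.1 hh2
  calc Int.gcd (2 * l * m + h * (m - 1)) (h * 2)
      = Int.gcd ((2 * l + h) * (m - h) + h * 2 * (l + c)) (h * 2) := by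
        congr 1
        linear_combination h * hc
    _ = Int.gcd (m - h) (h * 2) := by
        rw [Int.gcd_add_mul_left_left,
          Int.gcd_mul_right_left_of_gcd_eq_one (Int.isCoprime_iff_gcd_eq_one.1 hcop)]
    _ = Int.gcd (m - h + h * 2) (m - h) := by rw [Int.gcd_self_add_left, Int.gcd_comm]
    _ = Int.gcd (m + h) (m - h) := by ring_nf

theorem class_group_affine_SL2_embedding_general
    (n : ℕ)
    (nb u : ℤ)
    (hnb : nb = if n % 2 = 1 then (n : ℤ) else (n : ℤ) / 2)
    (hu : u = if n % 2 = 1 then 1 else 2)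
    (h l : ℤ)
    (hgcd : Int.gcd h (u * l) = 1)
    (w : ℤ) (hw : 2 * w = u * (nb - 1))
    (M : AddSubgroup (Fin 4 → ℤ))
    (hM : M = AddSubgroup.closure
      {![(-1 : ℤ), nb, h, 0], ![(-1 : ℤ), 0, 0, nb], ![u, -w, u * l, -w]})
    (d : ℕ)
    (hd : d = if n % 2 = 1 ∨ (h + 2 * l) % 2 = 0 then Int.gcd (n : ℤ) h
          else Int.gcd (nb + h) (nb - h)) :
    Nonempty (((Fin 4 → ℤ) ⧸ M) ≃+ ℤ × ZMod d) := by
  have hcop : IsCoprime h (u * l) := Int.isCoprime_iff_gcd_eq_one.2 hgcd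
  have hminor : h * (2 * w - u * nb) = -(h * u) := by linear_combination h * hw
  have hdiv : Int.gcd (u * l * nb + h * w) (h * (2 * w - u * nb)) = d := by
    rw [hminor, Int.gcd_neg, hd]
    by_cases hn_odd : n % 2 = 1
    · simp only [hn_odd, if_true, true_or] at hnb hu ⊢
      subst hnb hu
      simpa using gcd_mul_add_mul_left_eq_gcd (by simpa using hcop) n w
    · simp only [hn_odd, if_false, false_or] at hnb hu ⊢
      subst hu
      have hh : Odd h := Int.isCoprime_two_right.1 hcop.of_mul_right_left
      have hsum : ¬(h + 2 * l) % 2 = 0 := by grind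
      have hw_eq : w = nb - 1 := by omega
      rw [if_neg hsum, hw_eq]
      exact gcd_two_mul_mul_add_mul_sub_one_eq_gcd hcop nb
  rw [hM, ← hdiv]
  exact nonempty_quotient_closure_rows_addEquiv hcop nb u w

/-- Smith-normal-form computation of the class group of a normal affine almost
homogeneous `SL₂/μₙ`-embedding: the cokernel of the explicit 3×4 integer matrix
with rows `v₁ = (−1, n̄, h, 0)`, `v₂ = (−1, 0, 0, n̄)`,
`v₃ = (u, −u(n̄−1)/2, u·l, −u(n̄−1)/2)` is isomorphic to `ℤ × ℤ/dℤ`. -/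
theorem class_group_affine_SL2_embedding
    (n : ℕ) (hn : 1 ≤ n)
    (nb u : ℤ)
    (hnb : nb = if n % 2 = 1 then (n : ℤ) else (n : ℤ) / 2)
    (hu : u = if n % 2 = 1 then 1 else 2)
    (h l : ℤ) (hh : 1 ≤ h)
    (hgcd : Int.gcd h (u * l) = 1)
    (hpos : (nb + 1) * h + 2 * nb * l > 0)
    (hneg : h + 2 * l ≤ 0)
    (w : ℤ) (hw : 2 * w = u * (nb - 1))
    (M : AddSubgroup (Fin 4 → ℤ))
    (hM : M = AddSubgroup.closure
      {![(-1 : ℤ), nb, h, 0], ![(-1 : ℤ), 0, 0, nb], ![u, -w, u * l, -w]})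
    (d : ℕ)
    (hd : d = if n % 2 = 1 ∨ (h + 2 * l) % 2 = 0 then Int.gcd (n : ℤ) h
          else Int.gcd (nb + h) (nb - h)) :
    Nonempty (((Fin 4 → ℤ) ⧸ M) ≃+ ℤ × ZMod d) :=
  class_group_affine_SL2_embedding_general n nb u hnb hu h l hgcd w hw M hM d hd
end

section
/- Let n ≥ 1 be odd and let H be a subgroup of the dicyclic group QuaternionGroup n (Mathlib's `QuaternionGroup n`, the binary dihedral group of order 4n) that contains the commutator subgroup of QuaternionGroup n and satisfies H ≠ ⊤. Then H is cyclic. -/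
/-!
Write `a` and `x` for the generators, with `a` of order `2n` and `x² = aⁿ`. Since `⁅a, x⁆ = a²`, a
subgroup containing the derived subgroup contains `a²`. If it also contains some `x aⁱ`, it contains
`(x aⁱ)² = aⁿ`; for `n` odd, `a²` and `aⁿ` generate `⟨a⟩`, so the subgroup is everything. A proper
subgroup above the derived subgroup therefore lies in `⟨a⟩`.
-/

namespace Dicyclic

open QuaternionGroup Subgroup
open scoped commutatorElement

variable {n : ℕ}

theorem a_one_zpow (k : ℤ) : (a 1 : QuaternionGroup n) ^ k = a k := by
  cases k with
  | ofNat k => simp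
  | negSucc k =>
    rw [zpow_negSucc, a_one_pow, inv_eq_iff_mul_eq_one, a_mul_a, Int.cast_negSucc,
      add_neg_cancel, a_zero]

theorem a_mem_zpowers_a_one (i : ZMod (2 * n)) : a i ∈ zpowers (a 1 : QuaternionGroup n) := by
  obtain ⟨k, rfl⟩ := ZMod.intCast_surjective i
  exact ⟨k, a_one_zpow k⟩

theorem commutatorElement_a_xa (i j : ZMod (2 * n)) : ⁅a i, xa j⁆ = a (2 * i) := by
  rw [commutatorElement_def, mul_inv_eq_iff_eq_mul, mul_inv_eq_iff_eq_mul]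
  simp only [a_mul_xa, xa_mul_a]
  congr 1
  ring

theorem a_two_mul_mem_commutator (i : ZMod (2 * n)) :
    a (2 * i) ∈ commutator (QuaternionGroup n) := by
  rw [← commutatorElement_a_xa i 0, commutator_def]
  exact commutator_mem_commutator (mem_top _) (mem_top _)

theorem eq_top_of_a_one_mem_of_xa_mem {H : Subgroup (QuaternionGroup n)} {i : ZMod (2 * n)}
    (ha : a 1 ∈ H) (hxa : xa i ∈ H) : H = ⊤ := by
  have a_mem (j : ZMod (2 * n)) : a j ∈ H := zpowers_le.2 ha (a_mem_zpowers_a_one j)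
  refine eq_top_iff.2 ?_
  rintro (j | j) -
  · exact a_mem j
  · simpa only [xa_mul_a, add_sub_cancel] using H.mul_mem hxa (a_mem (j - i))

theorem a_one_mem_of_commutator_le_of_xa_mem (hodd : Odd n) {H : Subgroup (QuaternionGroup n)}
    (hcomm : commutator (QuaternionGroup n) ≤ H) {i : ZMod (2 * n)} (hxa : xa i ∈ H) :
    a 1 ∈ H := by
  have a_n_mem : a n ∈ H := xa_sq i ▸ H.pow_mem hxa 2
  obtain ⟨k, hk⟩ := hodd
  have n_eq : (n : ZMod (2 * n)) = 2 * k + 1 := mod_cast congrArg (Nat.cast (R := ZMod (2 * n))) hk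
  rw [n_eq, ← a_mul_a] at a_n_mem
  exact (H.mul_mem_cancel_left (hcomm (a_two_mul_mem_commutator _))).1 a_n_mem

theorem le_zpowers_a_one_of_commutator_le_of_ne_top (hodd : Odd n)
    {H : Subgroup (QuaternionGroup n)} (hcomm : commutator (QuaternionGroup n) ≤ H)
    (hne : H ≠ ⊤) : H ≤ zpowers (a 1) := by
  rintro (i | i) hi
  · exact a_mem_zpowers_a_one i
  · have ha : a 1 ∈ H := a_one_mem_of_commutator_le_of_xa_mem hodd hcomm hi
    exact absurd (eq_top_of_a_one_mem_of_xa_mem ha hi) hne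

end Dicyclic

/-- For `n` odd, every proper subgroup of the binary dihedral (dicyclic) group
of order `4n` containing the commutator subgroup is cyclic. -/
theorem proper_subgroups_above_commutator_cyclic
    (n : ℕ) (hn : 1 ≤ n) (hodd : Odd n)
    (H : Subgroup (QuaternionGroup n))
    (hcomm : commutator (QuaternionGroup n) ≤ H) (hne : H ≠ ⊤) :
    IsCyclic H :=
  Subgroup.isCyclic_of_le (Dicyclic.le_zpowers_a_one_of_commutator_le_of_ne_top hodd hcomm hne)
end

section
/- Let n ≥ 2 be even and let H be a subgroup of the dicyclic group QuaternionGroup n (Mathlib's `QuaternionGroup n`, the binary dihedral group of order 4n) that contains the commutator subgroup of QuaternionGroup n. Then H is cyclic, or H = ⊤, or H is isomorphic as a group to QuaternionGroup (n/2). -/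
/-!
If `H` contains no `xa k`, it lies in the cyclic group generated by `a 1`.

If `H` contains some `xa k`, then it is determined by `k` and its rotation part
`{z : ℤ | a z ∈ H}`, which is `dℤ` for some `d`, and `d ∣ n` because `xa k ^ 2 = a n`. If
`n = d * m` with `d ≠ 0`, the image of the embedding `a i ↦ a (d * i)`, `xa i ↦ xa (k + d * i)` of
`QuaternionGroup m` contains `xa k` and has the same rotation part, so it equals `H`. When `H`
contains the commutator subgroup, `a 2 = ⁅a 1, xa 0⁆ ∈ H` forces `d ∣ 2`.
-/

section ZModScale

variable {d N M : ℕ}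

/-- The homomorphism `ZMod N →+ ZMod (d * N)` induced by multiplication by `d` on `ℤ`. The modulus
of the codomain is a variable `M` with `d * N = M`, so that it may be used up to associativity. -/
def zmodScale (h : d * N = M) : ZMod N →+ ZMod M :=
  ZMod.lift N ⟨(Int.castAddHom (ZMod M)).comp (AddMonoidHom.mulLeft (d : ℤ)), by
    simp only [AddMonoidHom.comp_apply, AddMonoidHom.coe_mulLeft, Int.coe_castAddHom,
      ← Nat.cast_mul, h, Int.cast_natCast, ZMod.natCast_self]⟩

theorem zmodScale_intCast (h : d * N = M) (z : ℤ) : zmodScale h z = ((d * z : ℤ) : ZMod M) :=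
  ZMod.lift_coe N _ z

theorem zmodScale_natCast (h : d * N = M) (j : ℕ) : zmodScale h j = ((d * j : ℕ) : ZMod M) :=
  mod_cast zmodScale_intCast h j

theorem zmodScale_injective (h : d * N = M) (hd : d ≠ 0) : Function.Injective (zmodScale h) := by
  rw [injective_iff_map_eq_zero]
  intro x hx
  obtain ⟨z, rfl⟩ := ZMod.intCast_surjective x
  rw [zmodScale_intCast, ZMod.intCast_zmod_eq_zero_iff_dvd, ← h, Nat.cast_mul] at hx
  exact (ZMod.intCast_zmod_eq_zero_iff_dvd z N).2
    (Int.dvd_of_mul_dvd_mul_left (Nat.cast_ne_zero.2 hd) hx)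

theorem intCast_mem_range_zmodScale_iff (h : d * N = M) (z : ℤ) :
    (z : ZMod M) ∈ (zmodScale h).range ↔ (d : ℤ) ∣ z := by
  constructor
  · rintro ⟨x, hx⟩
    obtain ⟨w, rfl⟩ := ZMod.intCast_surjective x
    rw [zmodScale_intCast, ZMod.intCast_eq_intCast_iff_dvd_sub] at hx
    have hdM : (d : ℤ) ∣ M := Int.natCast_dvd_natCast.2 (Dvd.intro N h)
    exact (dvd_sub_left (dvd_mul_right _ w)).1 (hdM.trans hx)
  · rintro ⟨w, rfl⟩
    exact ⟨w, zmodScale_intCast h w⟩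

end ZModScale

theorem exists_forall_zpow_mem_iff_dvd {G : Type*} [Group G] (H : Subgroup G) (g : G) :
    ∃ d : ℕ, ∀ z : ℤ, g ^ z ∈ H ↔ (d : ℤ) ∣ z := by
  refine ⟨MulAction.period g ((1 : G) : G ⧸ H), fun z => ?_⟩
  rw [← MulAction.zpow_smul_eq_iff_period_dvd, MulAction.Quotient.smul_coe, smul_eq_mul, mul_one,
    eq_comm, QuotientGroup.eq, inv_one, one_mul]

section BinaryDihedral

open QuaternionGroup
open scoped commutatorElement

variable {n : ℕ}

theorem a_one_zpow (z : ℤ) : (a 1 : QuaternionGroup n) ^ z = a z := by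
  cases z with
  | ofNat j => simp
  | negSucc j =>
    rw [zpow_negSucc, a_one_pow, Int.cast_negSucc]
    rfl

theorem a_mem_zpowers_a_one (i : ZMod (2 * n)) : a i ∈ Subgroup.zpowers (a 1) := by
  obtain ⟨z, rfl⟩ := ZMod.intCast_surjective i
  exact ⟨z, a_one_zpow z⟩

theorem a_two_mem_commutator : a 2 ∈ commutator (QuaternionGroup n) := by
  have h : ⁅(a 1 : QuaternionGroup n), (xa 0 : QuaternionGroup n)⁆ = a 2 := by
    rw [commutatorElement_def, mul_inv_eq_iff_eq_mul, mul_inv_eq_iff_eq_mul]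
    simp only [a_mul_xa, xa_mul_a]
    congr 1
    ring
  rw [← h, commutator_def]
  exact Subgroup.commutator_mem_commutator (Subgroup.mem_top _) (Subgroup.mem_top _)

variable {H K : Subgroup (QuaternionGroup n)} {k : ZMod (2 * n)}

theorem isCyclic_of_forall_xa_notMem (h : ∀ i, xa i ∉ H) : IsCyclic H := by
  have hle : H ≤ Subgroup.zpowers (a 1) := by
    rintro (i | i) hi
    · exact a_mem_zpowers_a_one i
    · exact absurd hi (h i)
  exact isCyclic_of_injective (Subgroup.inclusion hle) (Subgroup.inclusion_injective hle)

theorem xa_mem_iff_a_sub_mem (hk : xa k ∈ H) (i : ZMod (2 * n)) : xa i ∈ H ↔ a (i - k) ∈ H := by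
  rw [← H.mul_mem_cancel_left hk (y := a (i - k)), xa_mul_a, add_sub_cancel]

theorem eq_of_xa_mem_of_forall_a_mem_iff (hH : xa k ∈ H) (hK : xa k ∈ K)
    (h : ∀ z : ℤ, a (z : ZMod (2 * n)) ∈ H ↔ a (z : ZMod (2 * n)) ∈ K) : H = K := by
  have ha (i : ZMod (2 * n)) : a i ∈ H ↔ a i ∈ K := by
    obtain ⟨z, rfl⟩ := ZMod.intCast_surjective i
    exact h z
  ext (i | i)
  · exact ha i
  · rw [xa_mem_iff_a_sub_mem hH, xa_mem_iff_a_sub_mem hK, ha]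

theorem exists_dvd_forall_a_mem_iff_dvd (hk : xa k ∈ H) :
    ∃ d : ℕ, d ∣ n ∧ ∀ z : ℤ, a (z : ZMod (2 * n)) ∈ H ↔ (d : ℤ) ∣ z := by
  obtain ⟨d, hd⟩ := exists_forall_zpow_mem_iff_dvd H (a 1)
  simp only [a_one_zpow] at hd
  have hn : a (n : ZMod (2 * n)) ∈ H := xa_sq k ▸ H.pow_mem hk 2
  exact ⟨d, Int.natCast_dvd_natCast.1 ((hd n).1 (mod_cast hn)), hd⟩

variable {d m : ℕ}

theorem mul_two_mul_eq_two_mul (h : d * m = n) : d * (2 * m) = 2 * n := by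
  rw [mul_left_comm, h]

/-- The homomorphism `a i ↦ a (d * i)`, `xa i ↦ xa (k + d * i)` between binary dihedral groups. For
`d ≠ 0` it is injective, and its image is a model for the subgroups containing `xa k`. -/
def quaternionGroupScale (h : d * m = n) (k : ZMod (2 * n)) :
    QuaternionGroup m →* QuaternionGroup n :=
  let ι : ZMod (2 * m) →+ ZMod (2 * n) := zmodScale (mul_two_mul_eq_two_mul h)
  have ι_m : ι m = n := by rw [zmodScale_natCast, h]
  MonoidHom.mk' (fun
    | a i => a (ι i)
    | xa i => xa (k + ι i)) (by
    rintro (i | i) (j | j)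
    · simp only [a_mul_a, map_add]
    · simp only [a_mul_xa, map_sub, add_sub_assoc]
    · simp only [xa_mul_a, map_add, add_assoc]
    · simp only [xa_mul_xa, map_sub, map_add, ι_m]
      congr 1
      ring)

theorem quaternionGroupScale_injective (h : d * m = n) (hd : d ≠ 0) (k : ZMod (2 * n)) :
    Function.Injective (quaternionGroupScale h k) := by
  have hι := zmodScale_injective (mul_two_mul_eq_two_mul h) hd
  rintro (i | i) (j | j) hij
  · exact congrArg a (hι (a.inj hij))
  · cases hij
  · cases hij
  · exact congrArg xa (hι (add_left_cancel (xa.inj hij)))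

theorem xa_mem_range_quaternionGroupScale (h : d * m = n) (k : ZMod (2 * n)) :
    xa k ∈ (quaternionGroupScale h k).range :=
  ⟨xa 0, congrArg xa (by rw [map_zero, add_zero])⟩

theorem a_mem_range_quaternionGroupScale_iff (h : d * m = n) (k : ZMod (2 * n)) (z : ℤ) :
    a (z : ZMod (2 * n)) ∈ (quaternionGroupScale h k).range ↔ (d : ℤ) ∣ z := by
  rw [← intCast_mem_range_zmodScale_iff (mul_two_mul_eq_two_mul h)]
  constructor
  · rintro ⟨j | j, hj⟩
    · exact ⟨j, a.inj hj⟩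
    · cases hj
  · rintro ⟨j, hj⟩
    exact ⟨a j, congrArg a hj⟩

theorem nonempty_mulEquiv_quaternionGroup (h : d * m = n) (hd : d ≠ 0) (hk : xa k ∈ H)
    (hH : ∀ z : ℤ, a (z : ZMod (2 * n)) ∈ H ↔ (d : ℤ) ∣ z) : Nonempty (H ≃* QuaternionGroup m) := by
  have hrange : H = (quaternionGroupScale h k).range :=
    eq_of_xa_mem_of_forall_a_mem_iff hk (xa_mem_range_quaternionGroupScale h k) fun z => by
      rw [hH, a_mem_range_quaternionGroupScale_iff]
  exact ⟨(MulEquiv.subgroupCongr hrange).trans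
    (MonoidHom.ofInjective (quaternionGroupScale_injective h hd k)).symm⟩

theorem subgroups_above_commutator_even_general (n : ℕ) (H : Subgroup (QuaternionGroup n))
    (hcomm : commutator (QuaternionGroup n) ≤ H) :
    IsCyclic H ∨ H = ⊤ ∨ Even n ∧ Nonempty (H ≃* QuaternionGroup (n / 2)) := by
  by_cases hxa : ∀ k, xa k ∉ H
  · exact .inl (isCyclic_of_forall_xa_notMem hxa)
  obtain ⟨k, hk⟩ := not_forall_not.1 hxa
  obtain ⟨d, hdn, hd⟩ := exists_dvd_forall_a_mem_iff_dvd hk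
  have hd2 : d ∣ 2 := Int.natCast_dvd_natCast.1 ((hd 2).1 (mod_cast hcomm a_two_mem_commutator))
  obtain rfl | rfl := (Nat.dvd_prime Nat.prime_two).1 hd2
  · have htop : H = ⊤ := eq_of_xa_mem_of_forall_a_mem_iff hk (Subgroup.mem_top _) fun z =>
      iff_of_true ((hd z).2 (mod_cast one_dvd z)) (Subgroup.mem_top _)
    exact .inr (.inl htop)
  · exact .inr (.inr ⟨even_iff_two_dvd.2 hdn,
      nonempty_mulEquiv_quaternionGroup (Nat.mul_div_cancel' hdn) two_ne_zero hk hd⟩)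

end BinaryDihedral

/-- For `n` even, every subgroup of the binary dihedral (dicyclic) group of
order `4n` containing the commutator subgroup is cyclic, or the whole group,
or isomorphic to the binary dihedral group of order `2n`. -/
theorem subgroups_above_commutator_even
    (n : ℕ) (hn : 2 ≤ n) (heven : Even n)
    (H : Subgroup (QuaternionGroup n))
    (hcomm : commutator (QuaternionGroup n) ≤ H) :
    IsCyclic H ∨ H = ⊤ ∨ Nonempty (H ≃* QuaternionGroup (n / 2)) :=
  (subgroups_above_commutator_even_general n H hcomm).imp_right (Or.imp_right And.right)
end
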